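/- Let K n denote the number of neutral head normal forms of size n. Then the sequence n ↦ K (n+1) · ρ^n · n^{3/2} converges to C as n → ∞; that is, K (n+1) ∼ (1/ρ)^n · C / n^{3/2}. -/

import Mathlib

/-- Lambda terms with de Bruijn indices. -/
inductive Term : Type
  | var : ℕ → Term
  | app : Term → Term → Term
  | abs : Term → Term

namespace Term

/-- Natural size: every operator (zero, successor, application, abstraction) has size 1. -/
def size : Term → ℕ
  | var k => k + 1
  | app M N => M.size + N.size + 1
  | abs M => M.size + 1

end Term

/-- `L n` is the number of lambda terms of size `n`. -/
noncomputable def L (n : ℕ) : ℕ := Nat.card {t : Term // t.size = n}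


/-- Neutral head normal forms: terms of the form `app (app … (app (var k) N₁) …) N_p`
with `p ≥ 0` and arbitrary terms `N₁, …, N_p`. -/
inductive IsNeutralHnf : Term → Prop
  | var (k : ℕ) : IsNeutralHnf (Term.var k)
  | app {m : Term} (n : Term) : IsNeutralHnf m → IsNeutralHnf (Term.app m n)

/-- `K n` is the number of neutral head normal forms of size `n`. -/
noncomputable def K (n : ℕ) : ℕ := Nat.card {t : Term // IsNeutralHnf t ∧ t.size = n}

/-!
Incrementing the head variable of a term, or turning its head abstraction `λ M` into `0 M`, is a
bijection from terms of size `n` onto neutral head normal forms of size `n + 1`, the form `0`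
excepted; hence `K (n + 1) = L n` for `n ≠ 0`. The generating function `T` of `L` satisfies the
quadratic equation `T = X (1 / (1 - X) + T + T²)`, so that `F = 1 - X - 2 X T` has
`F² = (1 - 3 X - X² - X³) / (1 - X)`. As `ρ` is a zero of the numerator, `F (ρ X) = h √(1 - X)`,
where `h²` is a rational function with poles only outside the unit disc and constant term `1`
exceeding the sum of its other coefficients. This smallness makes the coefficients of `h` itself
decay geometrically. The coefficients of `√(1 - X)` are rescaled Catalan numbers, with asymptotics
given by the Stirling formula; convolving with those of `h` multiplies their leading term by `h(1)`.
-/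

open Filter Topology PowerSeries
open scoped Asymptotics
open Finset (range)
open Finset.HasAntidiagonal (antidiagonal mem_antidiagonal)

namespace Term

/-- The size-raising bijection from terms onto the neutral head normal forms other than `var 0`.
It acts on the head of the application spine, which is a variable or an abstraction: the index of
a variable is incremented and an abstraction `abs M` becomes `app (var 0) M`. -/
def toNeutral : Term → Term
  | var k => var (k + 1)
  | app M N => app M.toNeutral N
  | abs M => app (var 0) M

theorem size_toNeutral (M : Term) : M.toNeutral.size = M.size + 1 := by
  induction M with
  | var k => rfl
  | app M N ihM _ => simp only [toNeutral, size, ihM]; ring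
  | abs M _ => simp only [toNeutral, size]; ring

theorem isNeutralHnf_toNeutral (M : Term) : IsNeutralHnf M.toNeutral := by
  induction M with
  | var k => exact .var _
  | app M N ihM _ => exact .app N ihM
  | abs M _ => exact .app M (.var 0)

theorem toNeutral_ne_var_zero (M : Term) : M.toNeutral ≠ var 0 := by
  cases M <;> simp [toNeutral]

theorem toNeutral_injective : Function.Injective toNeutral := by
  intro M
  induction M with
  | var k => intro M' h; cases M' <;> simp_all [toNeutral]
  | app M N ihM _ =>
    intro M' h
    cases M' with
    | var k => simp [toNeutral] at h
    | app M' N' =>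
      rw [toNeutral, toNeutral, app.injEq] at h
      rw [ihM h.1, h.2]
    | abs M' => exact absurd (app.inj h).1 M.toNeutral_ne_var_zero
  | abs M _ =>
    intro M' h
    cases M' with
    | var k => simp [toNeutral] at h
    | app M' N' => exact absurd (app.inj h).1.symm M'.toNeutral_ne_var_zero
    | abs M' => rw [(app.inj h).2]

theorem exists_toNeutral_eq {t : Term} (ht : IsNeutralHnf t) (ht₀ : t ≠ var 0) :
    ∃ M : Term, M.toNeutral = t := by
  induction ht with
  | var k =>
    obtain ⟨j, rfl⟩ := Nat.exists_eq_succ_of_ne_zero (fun hk : k = 0 ↦ ht₀ (by rw [hk]))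
    exact ⟨var j, rfl⟩
  | @app m N _ ih =>
    by_cases hm : m = var 0
    · exact ⟨abs N, by rw [toNeutral, hm]⟩
    · obtain ⟨M, rfl⟩ := ih hm
      exact ⟨app M N, rfl⟩

theorem size_ne_zero (t : Term) : t.size ≠ 0 := by
  cases t <;> simp [size]

instance isEmpty_size_zero : IsEmpty {t : Term // t.size = 0} :=
  ⟨fun t ↦ t.1.size_ne_zero t.2⟩

/-- Decomposition of a term of size `n + 1` at its root: the variable `var n`, an abstraction, or
an application whose two sides have sizes summing to `n`. -/
def sizeSuccEquiv (n : ℕ) : {t : Term // t.size = n + 1} ≃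
    Unit ⊕ {t : Term // t.size = n} ⊕
      Σ p : antidiagonal n, {t : Term // t.size = p.1.1} × {t : Term // t.size = p.1.2} where
  toFun
    | ⟨.var _, _⟩ => .inl ()
    | ⟨.abs M, h⟩ => .inr (.inl ⟨M, Nat.succ_injective h⟩)
    | ⟨.app M N, h⟩ =>
      .inr (.inr ⟨⟨(M.size, N.size), mem_antidiagonal.2 (Nat.succ_injective h)⟩,
        ⟨M, rfl⟩, ⟨N, rfl⟩⟩)
  invFun
    | .inl _ => ⟨.var n, rfl⟩
    | .inr (.inl M) => ⟨.abs M.1, congrArg (· + 1) M.2⟩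
    | .inr (.inr ⟨p, M, N⟩) =>
      ⟨.app M.1 N.1, by rw [size, M.2, N.2, mem_antidiagonal.1 p.2]⟩
  left_inv := by
    rintro ⟨_ | _ | _, h⟩
    · obtain rfl := Nat.succ_injective h
      rfl
    · rfl
    · rfl
  right_inv := by
    rintro (_ | M | ⟨⟨⟨i, j⟩, hp⟩, ⟨M, hM⟩, ⟨N, hN⟩⟩)
    · rfl
    · rfl
    · dsimp only at hM hN
      subst hM hN
      rfl

instance finite_size (n : ℕ) : Finite {t : Term // t.size = n} := by
  induction n using Nat.strong_induction_on with
  | _ n ih =>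
    cases n with
    | zero => infer_instance
    | succ n =>
      have finite_abs := ih n n.lt_succ_self
      have finite_app (p : antidiagonal n) :
          Finite ({t : Term // t.size = p.1.1} × {t : Term // t.size = p.1.2}) := by
        have := ih p.1.1 (Nat.lt_succ_of_le (Finset.HasAntidiagonal.antidiagonal.fst_le p.2))
        have := ih p.1.2 (Nat.lt_succ_of_le (Finset.HasAntidiagonal.antidiagonal.snd_le p.2))
        infer_instance
      exact Finite.of_equiv _ (sizeSuccEquiv n).symm

end Term

theorem K_succ_eq_L {n : ℕ} (hn : n ≠ 0) : K (n + 1) = L n := by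
  symm
  refine Nat.card_eq_of_bijective (fun M ↦ ⟨M.1.toNeutral, M.1.isNeutralHnf_toNeutral,
    M.1.size_toNeutral.trans (congrArg (· + 1) M.2)⟩) ⟨?_, ?_⟩
  · intro M M' h
    exact Subtype.ext (Term.toNeutral_injective (Subtype.ext_iff.1 h))
  · rintro ⟨t, ht, hsize⟩
    have ht₀ : t ≠ .var 0 := by
      rintro rfl
      exact hn (Nat.succ_injective hsize).symm
    obtain ⟨M, rfl⟩ := Term.exists_toNeutral_eq ht ht₀
    exact ⟨⟨M, Nat.succ_injective (M.size_toNeutral.symm.trans hsize)⟩, rfl⟩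

theorem L_zero : L 0 = 0 := Nat.card_of_isEmpty

theorem L_succ (n : ℕ) : L (n + 1) = 1 + L n + ∑ p ∈ antidiagonal n, L p.1 * L p.2 := by
  rw [L, Nat.card_congr (Term.sizeSuccEquiv n), Nat.card_sum, Nat.card_sum, Nat.card_sigma]
  simp only [Nat.card_prod, Nat.card_unique, ← add_assoc]
  congr 1
  exact Finset.sum_coe_sort (antidiagonal n) fun p ↦ L p.1 * L p.2

/-- The generating function `∑ L n Xⁿ` of lambda terms counted by size. -/
noncomputable def termSeries : ℝ⟦X⟧ := .mk fun n ↦ (L n : ℝ)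

theorem termSeries_eq : termSeries = X * (mk 1 + termSeries + termSeries ^ 2) := by
  ext n
  cases n with
  | zero => simp [termSeries, L_zero]
  | succ n => rw [coeff_succ_X_mul]; simp [termSeries, sq, coeff_mul, L_succ]

-- Completing the square in the quadratic equation `termSeries_eq`.
theorem one_sub_X_sub_termSeries_sq :
    (1 - X - 2 * X * termSeries) ^ 2 = (1 - 3 * X - X ^ 2 - X ^ 3) * mk 1 := by
  have geometric := mk_one_mul_one_sub_eq_one ℝ
  linear_combination (-4 * X) * termSeries_eq - (1 - X) ^ 2 * geometric

/-! ### The coefficients of `√(1 - X)` -/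

theorem centralBinom_div_four_pow_mul_sqrt {n : ℕ} (hn : n ≠ 0) :
    (n.centralBinom : ℝ) / 4 ^ n * √n =
      Stirling.stirlingSeq (2 * n) / Stirling.stirlingSeq n ^ 2 := by
  have factorial_two_mul : ((2 * n).factorial : ℝ) = n.centralBinom * (n.factorial : ℝ) ^ 2 := by
    rw [Nat.centralBinom_eq_two_mul_choose, ← Nat.choose_mul_factorial_mul_factorial
      (Nat.le_mul_of_pos_left n two_pos), two_mul, Nat.add_sub_cancel]
    push_cast
    ring
  have sqrt_four_mul : √(2 * (2 * n : ℝ)) = 2 * √n := by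
    rw [← mul_assoc, Real.sqrt_mul (by norm_num), show (2 * 2 : ℝ) = 2 ^ 2 by norm_num,
      Real.sqrt_sq zero_le_two]
  have two_mul_div_pow :
      (2 * n / Real.exp 1) ^ (2 * n) = 4 ^ n * ((n / Real.exp 1) ^ n) ^ 2 := by
    rw [mul_div_assoc, mul_pow, pow_mul, pow_mul' (n / Real.exp 1)]
    norm_num
  have sq_sqrt : √(n : ℝ) ^ 2 = n := Real.sq_sqrt n.cast_nonneg
  simp only [Stirling.stirlingSeq, Nat.cast_mul, Nat.cast_ofNat]
  rw [factorial_two_mul, sqrt_four_mul, two_mul_div_pow, div_pow (n.factorial : ℝ), mul_pow,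
    Real.sq_sqrt (by positivity)]
  field_simp
  rw [sq_sqrt]

theorem tendsto_centralBinom_div_four_pow_mul_sqrt :
    Tendsto (fun n : ℕ ↦ (n.centralBinom : ℝ) / 4 ^ n * √n) atTop (𝓝 (1 / √Real.pi)) := by
  have stirling := Stirling.tendsto_stirlingSeq_sqrt_pi
  have stirling_two_mul := stirling.comp (tendsto_id.const_mul_atTop' two_pos)
  have ratio := stirling_two_mul.div (stirling.pow 2) (by positivity)
  have limit_eq : √Real.pi / √Real.pi ^ 2 = 1 / √Real.pi := by field_simp
  rw [limit_eq] at ratio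
  refine ratio.congr' ?_
  filter_upwards [eventually_ne_atTop 0] with n hn
  exact (centralBinom_div_four_pow_mul_sqrt hn).symm

theorem tendsto_catalan_div_four_pow_mul_rpow :
    Tendsto (fun n : ℕ ↦ (catalan n : ℝ) / 4 ^ n * (n : ℝ) ^ (3 / 2 : ℝ)) atTop
      (𝓝 (1 / √Real.pi)) := by
  have product := tendsto_centralBinom_div_four_pow_mul_sqrt.mul (tendsto_natCast_div_add_atTop 1)
  rw [mul_one] at product
  refine product.congr fun n ↦ ?_
  have rpow_eq : (n : ℝ) ^ (3 / 2 : ℝ) = n * √n := by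
    rw [Real.sqrt_eq_rpow, ← Real.rpow_one_add' n.cast_nonneg (by norm_num)]
    norm_num
  rw [rpow_eq, ← succ_mul_catalan_eq_centralBinom]
  push_cast
  field_simp

/-- The power series `√(1 - X)`, written as `1 - (X / 2) c(X / 4)` where `c` is the generating
function of the Catalan numbers. -/
noncomputable def sqrtOneSubX : ℝ⟦X⟧ :=
  1 - C (1 / 2) * X * rescale (1 / 4) (catalanSeries.map (Nat.castRingHom ℝ))

theorem constantCoeff_sqrtOneSubX : constantCoeff sqrtOneSubX = 1 := by
  simp [sqrtOneSubX]

theorem sqrtOneSubX_sq : sqrtOneSubX ^ 2 = 1 - X := by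
  rw [sqrtOneSubX]
  set c := rescale (1 / 4 : ℝ) (catalanSeries.map (Nat.castRingHom ℝ))
  have catalan_eq : c ^ 2 * (C (1 / 4) * X) + 1 = c := by
    simpa only [map_add, map_mul, map_pow, map_X, map_one, rescale_X] using
      congrArg (fun f ↦ rescale (1 / 4 : ℝ) (f.map (Nat.castRingHom ℝ)))
        catalanSeries_sq_mul_X_add_one
  have half_sq : C (1 / 2 : ℝ) ^ 2 = C (1 / 4) := by rw [← map_pow]; norm_num
  have two_mul_half : 2 * C (1 / 2 : ℝ) = 1 := by rw [two_mul, ← map_add, add_halves, map_one]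
  linear_combination X * catalan_eq + X ^ 2 * c ^ 2 * half_sq - X * c * two_mul_half

theorem coeff_succ_sqrtOneSubX (n : ℕ) :
    coeff (n + 1) sqrtOneSubX = -(1 / 2) * (catalan n / 4 ^ n) := by
  simp only [sqrtOneSubX, map_sub, mul_assoc, coeff_C_mul, coeff_succ_X_mul, coeff_rescale,
    coeff_map, catalanSeries_coeff, coeff_one]
  simp [div_eq_inv_mul]

theorem tendsto_mul_natCast_add_rpow_iff (a : ℕ → ℝ) (c p : ℝ) (k : ℕ) :
    Tendsto (fun n : ℕ ↦ a n * ((n + k : ℕ) : ℝ) ^ p) atTop (𝓝 c) ↔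
      Tendsto (fun n : ℕ ↦ a n * (n : ℝ) ^ p) atTop (𝓝 c) := by
  have shift_equiv : (fun n : ℕ ↦ ((n + k : ℕ) : ℝ)) ~[atTop] fun n ↦ (n : ℝ) := by
    simpa only [Nat.cast_add] using Asymptotics.IsEquivalent.refl.add_const_of_norm_tendsto_atTop
      (tendsto_norm_atTop_atTop.comp tendsto_natCast_atTop_atTop)
  exact (Asymptotics.IsEquivalent.refl.mul
    (shift_equiv.rpow (r := p) fun n ↦ n.cast_nonneg)).tendsto_nhds_iff

theorem tendsto_shift_mul_natCast_rpow_iff (a : ℕ → ℝ) (c p : ℝ) (k : ℕ) :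
    Tendsto (fun n : ℕ ↦ a (n + k) * (n : ℝ) ^ p) atTop (𝓝 c) ↔
      Tendsto (fun n : ℕ ↦ a n * (n : ℝ) ^ p) atTop (𝓝 c) := by
  rw [← tendsto_mul_natCast_add_rpow_iff (fun n ↦ a (n + k)),
    tendsto_add_atTop_iff_nat (f := fun n : ℕ ↦ a n * (n : ℝ) ^ p) k]

theorem tendsto_coeff_sqrtOneSubX_mul_rpow :
    Tendsto (fun n : ℕ ↦ coeff n sqrtOneSubX * (n : ℝ) ^ (3 / 2 : ℝ)) atTop
      (𝓝 (-(1 / 2) * (1 / √Real.pi))) := by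
  rw [← tendsto_shift_mul_natCast_rpow_iff (fun n ↦ coeff n sqrtOneSubX) _ _ 1]
  simpa only [coeff_succ_sqrtOneSubX, mul_assoc] using
    tendsto_catalan_div_four_pow_mul_rpow.const_mul (-(1 / 2))

/-! ### Convolution of coefficient asymptotics -/

theorem exists_forall_abs_mul_succ_rpow_le {a : ℕ → ℝ} {c p : ℝ}
    (ha : Tendsto (fun n : ℕ ↦ a n * (n : ℝ) ^ p) atTop (𝓝 c)) :
    ∃ B, ∀ n : ℕ, |a n| * ((n + 1 : ℕ) : ℝ) ^ p ≤ B := by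
  obtain ⟨B, hB⟩ := ((tendsto_mul_natCast_add_rpow_iff a c p 1).2 ha).abs.bddAbove_range
  refine ⟨B, fun n ↦ ?_⟩
  simpa only [abs_mul, abs_of_nonneg (Real.rpow_nonneg (Nat.cast_nonneg (n + 1)) p)] using
    hB (Set.mem_range_self n)

theorem natCast_add_rpow_le {p : ℝ} (hp : 0 ≤ p) (k m : ℕ) :
    ((k + m : ℕ) : ℝ) ^ p ≤ ((k + 1 : ℕ) : ℝ) ^ p * ((m + 1 : ℕ) : ℝ) ^ p := by
  rw [← Real.mul_rpow (Nat.cast_nonneg _) (Nat.cast_nonneg _)]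
  refine Real.rpow_le_rpow (Nat.cast_nonneg _) ?_ hp
  exact_mod_cast (by ring_nf; lia : k + m ≤ (k + 1) * (m + 1))

theorem abs_mul_mul_natCast_add_rpow_le {p : ℝ} (hp : 0 ≤ p) (x : ℝ) {y B : ℝ} (k : ℕ) {m : ℕ}
    (hy : |y| * ((m + 1 : ℕ) : ℝ) ^ p ≤ B) :
    |x * (y * ((k + m : ℕ) : ℝ) ^ p)| ≤ |x| * ((k + 1 : ℕ) : ℝ) ^ p * B := by
  calc |x * (y * ((k + m : ℕ) : ℝ) ^ p)| = |x| * (|y| * ((k + m : ℕ) : ℝ) ^ p) := by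
        rw [abs_mul, abs_mul, abs_of_nonneg (Real.rpow_nonneg (Nat.cast_nonneg (k + m)) p)]
    _ ≤ |x| * (|y| * (((k + 1 : ℕ) : ℝ) ^ p * ((m + 1 : ℕ) : ℝ) ^ p)) := by
        gcongr
        exact natCast_add_rpow_le hp k m
    _ = |x| * ((k + 1 : ℕ) : ℝ) ^ p * (|y| * ((m + 1 : ℕ) : ℝ) ^ p) := by ring
    _ ≤ |x| * ((k + 1 : ℕ) : ℝ) ^ p * B := by gcongr

theorem tendsto_coeff_mul_mul_rpow {f g : ℝ⟦X⟧} {c p : ℝ} (hp : 0 ≤ p)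
    (hf : Summable fun k : ℕ ↦ |coeff k f| * ((k + 1 : ℕ) : ℝ) ^ p)
    (hg : Tendsto (fun n : ℕ ↦ coeff n g * (n : ℝ) ^ p) atTop (𝓝 c)) :
    Tendsto (fun n : ℕ ↦ coeff n (f * g) * (n : ℝ) ^ p) atTop (𝓝 ((∑' k, coeff k f) * c)) := by
  let term (n k : ℕ) : ℝ := if k ≤ n then coeff k f * (coeff (n - k) g * (n : ℝ) ^ p) else 0
  have tsum_term (n : ℕ) : ∑' k, term n k = coeff n (f * g) * (n : ℝ) ^ p := by
    have term_eq_zero (k : ℕ) (hk : k ∉ range (n + 1)) : term n k = 0 :=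
      if_neg fun h ↦ hk (Finset.mem_range_succ_iff.2 h)
    rw [tsum_eq_sum term_eq_zero, coeff_mul, Finset.Nat.sum_antidiagonal_eq_sum_range_succ
      (fun i j ↦ coeff i f * coeff j g), Finset.sum_mul]
    refine Finset.sum_congr rfl fun k hk ↦ ?_
    rw [mul_assoc]
    exact if_pos (Finset.mem_range_succ_iff.1 hk)
  have tendsto_term (k : ℕ) : Tendsto (term · k) atTop (𝓝 (coeff k f * c)) := by
    have shifted := (tendsto_shift_mul_natCast_rpow_iff (fun n ↦ coeff (n - k) g) c p k).1
      (by simpa only [Nat.add_sub_cancel] using hg)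
    refine (shifted.const_mul (coeff k f)).congr' ?_
    filter_upwards [eventually_ge_atTop k] with n hn
    exact (if_pos hn).symm
  obtain ⟨B, hB⟩ := exists_forall_abs_mul_succ_rpow_le hg
  have hB₀ : 0 ≤ B := le_trans (by positivity) (hB 0)
  have norm_term_le (n k : ℕ) : ‖term n k‖ ≤ |coeff k f| * ((k + 1 : ℕ) : ℝ) ^ p * B := by
    by_cases hk : k ≤ n
    · obtain ⟨m, rfl⟩ := Nat.exists_eq_add_of_le hk
      simpa only [term, if_pos hk, Nat.add_sub_cancel_left, Real.norm_eq_abs] using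
        abs_mul_mul_natCast_add_rpow_le hp (coeff k f) k (hB m)
    · rw [show term n k = 0 from if_neg hk, norm_zero]
      positivity
  rw [← tsum_mul_right]
  exact (tendsto_tsum_of_dominated_convergence (hf.mul_right B) tendsto_term
    (.of_forall norm_term_le)).congr tsum_term

theorem summable_mul_succ_rpow_of_summable_mul_pow {a : ℕ → ℝ} {r : ℝ} (hr : 1 < r)
    (ha : Summable fun k ↦ a k * r ^ k) (p : ℝ) :
    Summable fun k : ℕ ↦ a k * ((k + 1 : ℕ) : ℝ) ^ p := by
  have rpow_isBigO : (fun k : ℕ ↦ ((k + 1 : ℕ) : ℝ) ^ p) =O[atTop] fun k : ℕ ↦ r ^ k := by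
    have exp_log_mul (k : ℕ) : Real.exp (Real.log r * ((k + 1 : ℕ) : ℝ)) = r * r ^ k := by
      rw [mul_comm, Real.exp_nat_mul, Real.exp_log (zero_lt_one.trans hr), pow_succ']
    have rpow_isLittleO_exp := (isLittleO_rpow_exp_pos_mul_atTop p (Real.log_pos hr)).comp_tendsto
      (tendsto_natCast_atTop_atTop.comp (tendsto_add_atTop_nat 1))
    simp only [Function.comp_def, exp_log_mul] at rpow_isLittleO_exp
    exact rpow_isLittleO_exp.isBigO.trans (Asymptotics.isBigO_const_mul_self r _ _)
  exact summable_of_isBigO_nat ha.norm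
    ((Asymptotics.isBigO_refl a atTop).mul rpow_isBigO).norm_right

/-! ### Absolute convergence of square roots -/

theorem sum_range_norm_coeff_mul_le {R : Type*} [SeminormedRing R] (f g : R⟦X⟧) (N : ℕ) :
    ∑ n ∈ range N, ‖coeff n (f * g)‖ ≤
      (∑ n ∈ range N, ‖coeff n f‖) * ∑ n ∈ range N, ‖coeff n g‖ := by
  calc ∑ n ∈ range N, ‖coeff n (f * g)‖
      ≤ ∑ n ∈ range N, ∑ k ∈ range (n + 1), ‖coeff k f‖ * ‖coeff (n - k) g‖ := by
        refine Finset.sum_le_sum fun n _ ↦ ?_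
        rw [coeff_mul, Finset.Nat.sum_antidiagonal_eq_sum_range_succ
          (fun i j ↦ coeff i f * coeff j g)]
        exact norm_sum_le_of_le _ fun k _ ↦ norm_mul_le _ _
    _ = ∑ m ∈ range N, ∑ k ∈ range (N - m), ‖coeff m f‖ * ‖coeff k g‖ :=
        Finset.sum_range_diag_flip N fun i j ↦ ‖coeff i f‖ * ‖coeff j g‖
    _ ≤ ∑ m ∈ range N, ∑ k ∈ range N, ‖coeff m f‖ * ‖coeff k g‖ := by
        gcongr
        exact Nat.sub_le _ _
    _ = _ := (Finset.sum_mul_sum ..).symm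

-- Since `2 * u = v - X * u ^ 2`, a partial sum `T` of `‖u‖` forces the next one below
-- `(1 + T ^ 2) / 2`, and this preserves `T ≤ 1`.
theorem sum_range_norm_coeff_le_one_of_two_mul_add_X_mul_sq {u : ℝ⟦X⟧}
    (hu : ∀ N, ∑ n ∈ range N, ‖coeff n (2 * u + X * u ^ 2)‖ ≤ 1) (N : ℕ) :
    ∑ n ∈ range N, ‖coeff n u‖ ≤ 1 := by
  induction N with
  | zero => simp
  | succ N ih =>
    set T := ∑ n ∈ range N, ‖coeff n u‖
    have shift : ∑ n ∈ range (N + 1), ‖coeff n (X * u ^ 2)‖ = ∑ n ∈ range N, ‖coeff n (u ^ 2)‖ := by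
      simp [Finset.sum_range_succ']
    have coeff_two_mul (n : ℕ) :
        2 * ‖coeff n u‖ ≤ ‖coeff n (2 * u + X * u ^ 2)‖ + ‖coeff n (X * u ^ 2)‖ := by
      calc 2 * ‖coeff n u‖ = ‖coeff n (2 * u + X * u ^ 2) - coeff n (X * u ^ 2)‖ := by
            rw [← map_sub, add_sub_cancel_right, two_mul u, map_add, ← two_mul (coeff n u),
              norm_mul, Real.norm_two]
        _ ≤ _ := norm_sub_le _ _
    have step : 2 * ∑ n ∈ range (N + 1), ‖coeff n u‖ ≤ 1 + T ^ 2 :=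
      calc 2 * ∑ n ∈ range (N + 1), ‖coeff n u‖
          ≤ ∑ n ∈ range (N + 1), ‖coeff n (2 * u + X * u ^ 2)‖ +
              ∑ n ∈ range (N + 1), ‖coeff n (X * u ^ 2)‖ := by
            rw [Finset.mul_sum, ← Finset.sum_add_distrib]
            exact Finset.sum_le_sum fun n _ ↦ coeff_two_mul n
        _ ≤ 1 + T ^ 2 := by
            rw [shift]
            refine add_le_add (hu (N + 1)) ?_
            rw [sq u, sq T]
            exact sum_range_norm_coeff_mul_le u u N
    have hT₀ : 0 ≤ T := Finset.sum_nonneg fun n _ ↦ norm_nonneg _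
    have : T ^ 2 ≤ 1 := pow_le_one₀ hT₀ ih
    linarith

theorem sum_range_norm_coeff_le_two_of_sq {f : ℝ⟦X⟧} (hf₀ : constantCoeff f = 1)
    (hf : ∀ N, ∑ n ∈ range N, ‖coeff n (f ^ 2)‖ ≤ 2) (N : ℕ) :
    ∑ n ∈ range N, ‖coeff n f‖ ≤ 2 := by
  obtain ⟨u, hu⟩ : X ∣ f - 1 := X_dvd_iff.2 (by simp [hf₀])
  obtain rfl : f = 1 + X * u := by linear_combination hu
  have sum_range_succ_norm_coeff (v : ℝ⟦X⟧) (N : ℕ) :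
      ∑ n ∈ range (N + 1), ‖coeff n (1 + X * v)‖ = ∑ n ∈ range N, ‖coeff n v‖ + 1 := by
    simp [Finset.sum_range_succ', coeff_one]
  have tail_le := sum_range_norm_coeff_le_one_of_two_mul_add_X_mul_sq (u := u) fun N ↦ by
    have := hf (N + 1)
    rw [show (1 + X * u) ^ 2 = 1 + X * (2 * u + X * u ^ 2) by ring,
      sum_range_succ_norm_coeff] at this
    linarith
  calc ∑ n ∈ range N, ‖coeff n (1 + X * u)‖
      ≤ ∑ n ∈ range (N + 1), ‖coeff n (1 + X * u)‖ :=
        Finset.sum_le_sum_of_subset_of_nonneg (Finset.range_mono N.le_succ)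
          fun n _ _ ↦ norm_nonneg _
    _ ≤ 2 := by
        rw [sum_range_succ_norm_coeff]
        linarith [tail_le N]

theorem tsum_coeff_nonneg_of_tsum_norm_coeff_le_two {f : ℝ⟦X⟧} (hf₀ : constantCoeff f = 1)
    (hf : Summable fun n ↦ ‖coeff n f‖) (hf₂ : ∑' n, ‖coeff n f‖ ≤ 2) :
    0 ≤ ∑' n, coeff n f := by
  have tail_summable := (summable_nat_add_iff 1).2 hf
  have tail_le := norm_tsum_le_tsum_norm tail_summable
  rw [hf.tsum_eq_zero_add, coeff_zero_eq_constantCoeff_apply, hf₀, norm_one] at hf₂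
  rw [hf.of_norm.tsum_eq_zero_add, coeff_zero_eq_constantCoeff_apply, hf₀]
  linarith [neg_le_of_abs_le tail_le]

theorem tsum_coeff_sq {f : ℝ⟦X⟧} (hf : Summable fun n ↦ ‖coeff n f‖) :
    ∑' n, coeff n (f ^ 2) = (∑' n, coeff n f) ^ 2 := by
  simp only [sq, coeff_mul, tsum_mul_tsum_eq_tsum_sum_antidiagonal_of_summable_norm hf hf]

theorem summable_norm_coeff_mul_pow_of_sq {f : ℝ⟦X⟧} {r : ℝ} (hr : 0 ≤ r)
    (hf₀ : constantCoeff f = 1) (hf : ∀ N, ∑ n ∈ range N, ‖coeff n (f ^ 2)‖ * r ^ n ≤ 2) :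
    Summable fun n ↦ ‖coeff n f‖ * r ^ n := by
  have norm_coeff_rescale (g : ℝ⟦X⟧) (n : ℕ) : ‖coeff n (rescale r g)‖ = ‖coeff n g‖ * r ^ n := by
    rw [coeff_rescale, norm_mul, Real.norm_of_nonneg (pow_nonneg hr n), mul_comm]
  have partial_sums_le := sum_range_norm_coeff_le_two_of_sq (f := rescale r f)
    (by rw [← coeff_zero_eq_constantCoeff_apply, coeff_rescale]; simp [hf₀])
    (by simpa only [← map_pow, norm_coeff_rescale] using hf)
  simp only [norm_coeff_rescale] at partial_sums_le
  exact summable_of_sum_range_le (fun n ↦ by positivity) partial_sums_le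

theorem tsum_coeff_eq_sqrt_tsum_coeff_sq {f : ℝ⟦X⟧} (hf₀ : constantCoeff f = 1)
    (hf : ∀ N, ∑ n ∈ range N, ‖coeff n (f ^ 2)‖ ≤ 2) :
    ∑' n, coeff n f = √(∑' n, coeff n (f ^ 2)) := by
  have partial_sums_le := sum_range_norm_coeff_le_two_of_sq hf₀ hf
  have summable := summable_of_sum_range_le (fun n ↦ norm_nonneg (coeff n f)) partial_sums_le
  rw [tsum_coeff_sq summable, Real.sqrt_sq (tsum_coeff_nonneg_of_tsum_norm_coeff_le_two hf₀
    summable (summable.tsum_le_of_sum_range_le partial_sums_le))]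

-- Transfer for a square-root singularity: `f = h * √(1 - X)` with `h ^ 2 = g`, and the bound on `g`
-- makes the coefficients of `h` decay geometrically.
theorem tendsto_coeff_mul_rpow_of_sq_eq_one_sub_X_mul {f g : ℝ⟦X⟧} {r : ℝ} (hr : 1 < r)
    (hf₀ : constantCoeff f = 1) (hfg : f ^ 2 = (1 - X) * g)
    (hg : ∀ N, ∑ n ∈ range N, ‖coeff n g‖ * r ^ n ≤ 2) :
    Tendsto (fun n : ℕ ↦ coeff n f * (n : ℝ) ^ (3 / 2 : ℝ)) atTop
      (𝓝 (√(∑' n, coeff n g) * (-(1 / 2) * (1 / √Real.pi)))) := by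
  have sqrt_mul_inv : sqrtOneSubX * sqrtOneSubX⁻¹ = 1 :=
    PowerSeries.mul_inv_cancel _ (by rw [constantCoeff_sqrtOneSubX]; exact one_ne_zero)
  set h := f * sqrtOneSubX⁻¹
  have hf : f = h * sqrtOneSubX := by linear_combination -f * sqrt_mul_inv
  have hh₀ : constantCoeff h = 1 := by simp [h, hf₀, constantCoeff_sqrtOneSubX]
  obtain rfl : h ^ 2 = g := by
    have inv_sq : (1 - X) * sqrtOneSubX⁻¹ ^ 2 = 1 := by
      rw [← sqrtOneSubX_sq, ← mul_pow, sqrt_mul_inv, one_pow]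
    linear_combination sqrtOneSubX⁻¹ ^ 2 * hfg + g * inv_sq
  have hg₁ (N : ℕ) : ∑ n ∈ range N, ‖coeff n (h ^ 2)‖ ≤ 2 :=
    (Finset.sum_le_sum fun n _ ↦
      le_mul_of_one_le_right (norm_nonneg _) (one_le_pow₀ hr.le)).trans (hg N)
  rw [hf, ← tsum_coeff_eq_sqrt_tsum_coeff_sq hh₀ hg₁]
  exact tendsto_coeff_mul_mul_rpow (by norm_num)
    (summable_mul_succ_rpow_of_summable_mul_pow hr
      (summable_norm_coeff_mul_pow_of_sq (zero_le_one.trans hr.le) hh₀ hg) _)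
    tendsto_coeff_sqrtOneSubX_mul_rpow

/-! ### The dominant singularity of the term series -/

theorem hasSum_coeff_X_mul {f : ℝ⟦X⟧} {x s : ℝ} (hf : HasSum (fun n ↦ coeff n f * x ^ n) s) :
    HasSum (fun n ↦ coeff n (X * f) * x ^ n) (x * s) := by
  rw [← hasSum_nat_add_iff' 1]
  simpa [pow_succ', mul_left_comm] using hf.mul_left x

/-- The expansion of the rational function `(1 + b X + c X²) / (1 - ρ X)`. -/
noncomputable def quadraticDivOneSub (b c ρ : ℝ) : ℝ⟦X⟧ :=
  (1 + C b * X + C c * X ^ 2) * mk (ρ ^ ·)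

theorem hasSum_coeff_quadraticDivOneSub {b c ρ x : ℝ} (hx : |ρ * x| < 1) :
    HasSum (fun n ↦ coeff n (quadraticDivOneSub b c ρ) * x ^ n)
      ((1 + b * x + c * x ^ 2) / (1 - ρ * x)) := by
  have geometric : HasSum (fun n ↦ coeff n (mk (ρ ^ ·)) * x ^ n) (1 - ρ * x)⁻¹ := by
    simpa only [coeff_mk, mul_pow] using hasSum_geometric_of_abs_lt_one hx
  have linear := hasSum_coeff_X_mul geometric
  have quadratic := hasSum_coeff_X_mul linear
  convert (geometric.add (linear.mul_left b)).add (quadratic.mul_left c) using 1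
  · funext n
    rw [quadraticDivOneSub, show (1 + C b * X + C c * X ^ 2) * mk (ρ ^ ·) =
      mk (ρ ^ ·) + C b * (X * mk (ρ ^ ·)) + C c * (X * (X * mk (ρ ^ ·))) by ring]
    simp only [map_add, coeff_C_mul]
    ring
  · ring

theorem coeff_quadraticDivOneSub_nonneg {b c ρ : ℝ} (hb : 0 ≤ b) (hc : 0 ≤ c) (hρ : 0 ≤ ρ) (n : ℕ) :
    0 ≤ coeff n (quadraticDivOneSub b c ρ) := by
  rw [quadraticDivOneSub, coeff_mul]
  refine Finset.sum_nonneg fun p _ ↦ mul_nonneg ?_ (by simpa using pow_nonneg hρ _)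
  simp only [map_add, coeff_C_mul, coeff_one, coeff_X, coeff_X_pow]
  positivity

theorem tsum_coeff_quadraticDivOneSub (b c : ℝ) {ρ : ℝ} (hρ : |ρ| < 1) :
    ∑' n, coeff n (quadraticDivOneSub b c ρ) = (1 + b + c) / (1 - ρ) := by
  simpa using (hasSum_coeff_quadraticDivOneSub (b := b) (c := c) (ρ := ρ) (x := 1)
    (by rwa [mul_one])).tsum_eq

theorem sum_range_norm_coeff_quadraticDivOneSub_le {ρ : ℝ} (hρ₀ : 0 ≤ ρ) (hρ : ρ ≤ 3 / 10)
    (N : ℕ) :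
    ∑ n ∈ range N, ‖coeff n (quadraticDivOneSub (ρ ^ 3 + ρ ^ 2) (ρ ^ 3) ρ)‖ * (11 / 10) ^ n ≤
      2 := by
  have coeff_nonneg := coeff_quadraticDivOneSub_nonneg
    (b := ρ ^ 3 + ρ ^ 2) (c := ρ ^ 3) (by positivity) (by positivity) hρ₀
  have hρ_sq : ρ ^ 2 ≤ 9 / 100 := by nlinarith
  have hasSum := hasSum_coeff_quadraticDivOneSub (b := ρ ^ 3 + ρ ^ 2) (c := ρ ^ 3) (ρ := ρ)
    (x := 11 / 10) (by rw [abs_of_nonneg (by positivity)]; linarith)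
  simp only [Real.norm_of_nonneg (coeff_nonneg _)]
  refine (sum_le_hasSum _ (fun n _ ↦ mul_nonneg (coeff_nonneg n) (by positivity)) hasSum).trans ?_
  rw [div_le_iff₀ (by linarith)]
  nlinarith

-- The root `ρ` splits off `1 - X`:
-- `1 - 3 ρ X - ρ² X² - ρ³ X³ = (1 - X) (1 + (ρ³ + ρ²) X + ρ³ X²)`.
theorem rescale_termSeries_sq {ρ : ℝ} (hρ : ρ ^ 3 + ρ ^ 2 + 3 * ρ - 1 = 0) :
    rescale ρ (1 - X - 2 * X * termSeries) ^ 2 =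
      (1 - X) * quadraticDivOneSub (ρ ^ 3 + ρ ^ 2) (ρ ^ 3) ρ := by
  have rescale_mk_one : rescale ρ (mk 1) = mk (ρ ^ ·) := by simp [rescale_mk]
  have root : C ρ ^ 3 + C ρ ^ 2 + 3 * C ρ - 1 = 0 := by
    simpa [map_ofNat] using congrArg (C (R := ℝ)) hρ
  rw [← map_pow, one_sub_X_sub_termSeries_sq, quadraticDivOneSub, map_mul, rescale_mk_one]
  simp only [map_sub, map_mul, map_add, map_pow, map_one, map_ofNat, rescale_X]
  linear_combination -X * mk (ρ ^ ·) * root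

theorem lt_three_tenths_of_root {ρ : ℝ} (hρ : ρ ^ 3 + ρ ^ 2 + 3 * ρ - 1 = 0) : ρ < 3 / 10 := by
  by_contra! h
  nlinarith [pow_le_pow_left₀ (by norm_num) h 2, pow_le_pow_left₀ (by norm_num) h 3]

theorem coeff_succ_rescale_termSeries (ρ : ℝ) {n : ℕ} (hn : n ≠ 0) :
    coeff (n + 1) (rescale ρ (1 - X - 2 * X * termSeries)) = -2 * ρ ^ (n + 1) * L n := by
  rw [coeff_rescale, map_sub, map_sub, mul_assoc, two_mul, map_add, coeff_succ_X_mul]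
  have coeff_one_eq : coeff (n + 1) (1 : ℝ⟦X⟧) = 0 := by simp [coeff_one]
  have coeff_X_eq : coeff (n + 1) (X : ℝ⟦X⟧) = 0 := by simp [coeff_X, hn]
  rw [coeff_one_eq, coeff_X_eq, termSeries, coeff_mk]
  ring

theorem tendsto_L_mul_pow_mul_rpow {ρ : ℝ} (hρ₀ : 0 < ρ)
    (hρ : ρ ^ 3 + ρ ^ 2 + 3 * ρ - 1 = 0) :
    Tendsto (fun n : ℕ ↦ (L n : ℝ) * ρ ^ n * (n : ℝ) ^ (3 / 2 : ℝ)) atTop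
      (𝓝 (√(ρ * (3 * ρ ^ 2 + 2 * ρ + 3) / (1 - ρ)) / (4 * ρ * √Real.pi))) := by
  have hρ_lt := lt_three_tenths_of_root hρ
  have transfer := tendsto_coeff_mul_rpow_of_sq_eq_one_sub_X_mul (by norm_num) (by simp)
    (rescale_termSeries_sq hρ) (sum_range_norm_coeff_quadraticDivOneSub_le hρ₀.le hρ_lt.le)
  have numerator_eq : 1 + (ρ ^ 3 + ρ ^ 2) + ρ ^ 3 = ρ * (3 * ρ ^ 2 + 2 * ρ + 3) := by
    linear_combination -hρ
  rw [tsum_coeff_quadraticDivOneSub _ _ (by rw [abs_of_pos hρ₀]; linarith), numerator_eq,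
    ← tendsto_shift_mul_natCast_rpow_iff
      (fun n ↦ coeff n (rescale ρ (1 - X - 2 * X * termSeries))) _ _ 1] at transfer
  convert (transfer.const_mul (-(1 / (2 * ρ)))).congr' ?_ using 2
  · field_simp
    ring
  · filter_upwards [eventually_ne_atTop 0] with n hn
    rw [coeff_succ_rescale_termSeries ρ hn, pow_succ]
    field_simp

theorem K_asymptotics (ρ C : ℝ)
    (hρ_mem : ρ ∈ Set.Ioo (0 : ℝ) 1)
    (hρ_root : ρ ^ 3 + ρ ^ 2 + 3 * ρ - 1 = 0)
    (hC : C = Real.sqrt (ρ * (3 * ρ ^ 2 + 2 * ρ + 3) / (1 - ρ)) / (4 * ρ * Real.sqrt Real.pi)) :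
    Filter.Tendsto (fun n : ℕ => (K (n + 1) : ℝ) * ρ ^ n * (n : ℝ) ^ ((3 : ℝ) / 2))
      Filter.atTop (nhds C) := by
  rw [hC]
  refine (tendsto_L_mul_pow_mul_rpow hρ_mem.1 hρ_root).congr' ?_
  filter_upwards [eventually_ne_atTop 0] with n hn
  rw [K_succ_eq_L hn]
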